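/- Let n > 1 be an integer. There exist infinitely many pairwise non-isomorphic number fields K with the following properties: there is a positive integer y with y odd and y not divisible by 3 such that the polynomial x³ + ((yⁿ+3)/2)x² + ((yⁿ−3)/2)x − 1 is irreducible over ℚ and K is its splitting field; K is a totally real Galois extension of ℚ of degree 3 with Galois group isomorphic to ℤ/3ℤ; and rank_n Cl(K) ≥ 2. -/

import Mathlib

open Polynomial NumberField

/-- `M` contains a subgroup isomorphic to `(ℤ/nℤ)^s`, i.e. `rank_n M ≥ s`. -/
def HasZModRankGE (M : Type*) [CommGroup M] (n s : ℕ) : Prop :=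
  ∃ φ : (Multiplicative (Fin s → ZMod n)) →* M, Function.Injective φ

/-- A number field (here a subfield of `ℂ`) is totally real if all of its complex
embeddings take real values. -/
def TotallyReal (K : Type*) [Field K] : Prop :=
  ∀ (φ : K →+* ℂ) (x : K), (φ x).im = 0



open ArithmeticFunction.vonMangoldt Filter Topology in
lemma aux_not_summable_prime_inv (p : ℕ) [NeZero p] :
    ¬ Summable (fun n : ℕ => if n.Prime ∧ (n : ZMod p) = 1 then 1 / (n : ℝ) else 0) := by
  intro H
  have hbd := H.add (summable_residueClass_non_primes_div (1 : ZMod p))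
  obtain ⟨C, hC⟩ := LSeries_residueClass_lower_bound (q := p) (a := 1) isUnit_one
  have key : Tendsto (fun δ : ℝ => ∑' n : ℕ, δ * (residueClass (1 : ZMod p) n / (n : ℝ) ^ (1 + δ)))
      (𝓝[>] 0) (𝓝 (∑' n : ℕ, (0 : ℝ))) := by
    refine tendsto_tsum_of_dominated_convergence hbd ?_ ?_
    · intro n
      have h1 : Tendsto (fun δ : ℝ => δ * residueClass (1 : ZMod p) n) (𝓝[>] 0) (𝓝 0) := by
        have : Tendsto (fun δ : ℝ => δ * residueClass (1 : ZMod p) n) (𝓝 0)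
            (𝓝 (0 * residueClass (1 : ZMod p) n)) := tendsto_id.mul_const _
        rw [zero_mul] at this
        exact this.mono_left nhdsWithin_le_nhds
      refine squeeze_zero' ?_ ?_ h1
      · filter_upwards [self_mem_nhdsWithin] with δ hδ
        have : (0:ℝ) < δ := hδ
        have := residueClass_nonneg (1 : ZMod p) n
        positivity
      · filter_upwards [self_mem_nhdsWithin] with δ hδ
        have hδ' : (0:ℝ) < δ := hδ
        have h0 := residueClass_nonneg (1 : ZMod p) n
        rcases Nat.eq_zero_or_pos n with rfl | hn
        · simp
        · gcongr
          refine div_le_self h0 ?_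
          exact Real.one_le_rpow (by exact_mod_cast hn) (by linarith)
    · have hmem : Set.Ioc (0:ℝ) 1 ∈ 𝓝[>] (0:ℝ) := Ioc_mem_nhdsGT one_pos
      filter_upwards [hmem] with δ hδ n
      have h0 := residueClass_nonneg (1 : ZMod p) n
      have hδ0 := hδ.1
      have hδ1 := hδ.2
      rw [Real.norm_of_nonneg (by positivity)]
      rcases Nat.eq_zero_or_pos n with rfl | hn
      · simp
      have hn' : (0:ℝ) < n := by exact_mod_cast hn
      have hn1 : (1:ℝ) ≤ n := by exact_mod_cast hn
      rw [Real.rpow_add hn', Real.rpow_one]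
      by_cases hp : n.Prime
      · simp only [hp, true_and, if_true, zero_div, add_zero]
        by_cases h1 : (n : ZMod p) = 1
        · simp only [h1, if_true]
          have hle : residueClass (1 : ZMod p) n ≤ Real.log n := by
            have := residueClass_le (1 : ZMod p) n
            rwa [ArithmeticFunction.vonMangoldt_apply_prime hp] at this
          have hlog := Real.log_le_rpow_div hn'.le hδ0
          have hpos : (0:ℝ) < (n:ℝ) ^ δ := by positivity
          rw [le_div_iff₀ hδ0] at hlog
          rw [← mul_div_assoc, div_le_div_iff₀ (by positivity) hn', one_mul]
          have : δ * residueClass (1 : ZMod p) n ≤ (n:ℝ)^δ := by nlinarith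
          nlinarith
        · have : residueClass (1 : ZMod p) n = 0 := by
            simp [residueClass, h1]
          simp [h1, this]
      · simp only [hp, false_and, if_false, zero_add]
        rw [← div_div, ← mul_div_assoc]
        have hpos : (1:ℝ) ≤ (n:ℝ) ^ δ := Real.one_le_rpow hn1 hδ0.le
        have h2 : 0 ≤ residueClass (1 : ZMod p) n / n := by positivity
        calc δ * (residueClass (1 : ZMod p) n / n) / (n:ℝ)^δ ≤ δ * (residueClass (1 : ZMod p) n / n) :=
              div_le_self (by positivity) hpos
          _ ≤ 1 * (residueClass (1 : ZMod p) n / n) := by gcongr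
          _ = _ := one_mul _
  rw [tsum_zero] at key
  have h2 : Tendsto (fun δ : ℝ => (p.totient : ℝ)⁻¹ - C * δ) (𝓝[>] 0) (𝓝 ((p.totient : ℝ)⁻¹ - C * 0)) := by
    refine Tendsto.mono_left ?_ nhdsWithin_le_nhds
    exact tendsto_const_nhds.sub (tendsto_const_nhds.mul tendsto_id)
  have hq : 0 < (p.totient : ℝ)⁻¹ := inv_pos.mpr (mod_cast p.totient.pos_of_neZero)
  have : (p.totient : ℝ)⁻¹ - C * 0 ≤ 0 := by
    refine le_of_tendsto_of_tendsto h2 key ?_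
    have hmem : Set.Ioc (0:ℝ) 1 ∈ 𝓝[>] (0:ℝ) := Ioc_mem_nhdsGT one_pos
    filter_upwards [hmem] with δ hδ
    have := hC (x := 1 + δ) ⟨by linarith [hδ.1], by linarith [hδ.2]⟩
    rw [tsum_mul_left]
    have h3 := mul_le_mul_of_nonneg_left this hδ.1.le
    refine le_trans (le_of_eq ?_) h3
    have := hδ.1.ne'
    rw [add_sub_cancel_left]
    field_simp
  linarith



/-- A simple root modulo `l` of the minimal polynomial of `α` gives a ring hom `𝓞 K → ℤ/l`. -/
lemma aux_hom_of_simple_root {K : Type*} [Field K] [NumberField K] (α : 𝓞 K)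
    (hα : Algebra.adjoin ℚ {(α : K)} = ⊤) (l : ℕ) [Fact l.Prime] (r : ZMod l)
    (h0 : aeval r (minpoly ℤ α) = 0) (h1 : aeval r (derivative (minpoly ℤ α)) ≠ 0) :
    ∃ φ : 𝓞 K →+* ZMod l, φ α = r := by
  have hint : IsIntegral ℤ α := RingOfIntegers.isIntegral α
  set δ : 𝓞 K := aeval α (derivative (minpoly ℤ α)) with hδ
  have hcond : ∀ z : 𝓞 K, δ * z ∈ Algebra.adjoin ℤ {α} := by
    have h2 := conductor_mul_differentIdeal ℤ ℚ K α hα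
    have h3 : δ ∈ conductor ℤ α := by
      have h4 : Ideal.span ({δ} : Set (𝓞 K)) ≤ conductor ℤ α := by
        rw [hδ, ← h2]; exact Ideal.mul_le_left (J := differentIdeal ℤ (𝓞 K)) (I := conductor ℤ α)
      exact h4 (Ideal.mem_span_singleton_self _)
    intro z
    exact h3 z
  let pb := Algebra.adjoin.powerBasis' hint
  have hgen : pb.gen = ⟨α, Algebra.self_mem_adjoin_singleton ℤ α⟩ :=
    Algebra.adjoin.powerBasis'_gen hint
  have hmin : minpoly ℤ pb.gen = minpoly ℤ α := Algebra.adjoin.powerBasis'_minpoly_gen hint |>.symm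
  let ψ : Algebra.adjoin ℤ {α} →ₐ[ℤ] ZMod l := pb.lift r (by rw [hmin]; exact h0)
  have hψα : ψ ⟨α, Algebra.self_mem_adjoin_singleton ℤ α⟩ = r := by
    rw [← hgen]; exact pb.lift_gen r _
  set d : ZMod l := aeval r (derivative (minpoly ℤ α)) with hd
  have hδmem : δ ∈ Algebra.adjoin ℤ {α} := by simpa using hcond 1
  have hψδ : ψ ⟨δ, hδmem⟩ = d := by
    have : (⟨δ, hδmem⟩ : Algebra.adjoin ℤ {α}) =
        aeval (⟨α, Algebra.self_mem_adjoin_singleton ℤ α⟩ : Algebra.adjoin ℤ {α})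
          (derivative (minpoly ℤ α)) := by
      apply Subtype.ext
      change δ = _
      rw [hδ, ← Subalgebra.aeval_coe]
    rw [this, ← aeval_algHom_apply, hψα]
  refine ⟨{ toFun := fun z => ψ ⟨δ * z, hcond z⟩ / d, map_one' := ?_, map_mul' := ?_,
            map_zero' := ?_, map_add' := ?_ }, ?_⟩
  · rw [div_eq_one_iff_eq h1, ← hψδ]
    congr 1; apply Subtype.ext; simp
  · intro x y
    have : ψ ⟨δ, hδmem⟩ * ψ ⟨δ * (x * y), hcond _⟩ = ψ ⟨δ * x, hcond x⟩ * ψ ⟨δ * y, hcond y⟩ := by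
      rw [← map_mul, ← map_mul]
      congr 1; apply Subtype.ext; simp; ring
    rw [hψδ] at this
    rw [div_mul_div_comm, ← this, mul_div_mul_left _ _ h1]
  · rw [div_eq_zero_iff]; left
    rw [← map_zero ψ]
    congr 1; apply Subtype.ext; simp
  · intro x y
    rw [← add_div, ← map_add]
    congr 2; apply Subtype.ext; simp; ring
  · change ψ ⟨δ * α, hcond α⟩ / d = r
    rw [div_eq_iff h1, ← hψδ, ← hψα, ← map_mul]
    congr 1; apply Subtype.ext; simp; ring



open Filter Topology in
lemma aux_count {M : Type*} [Field M] [NumberField M] (p : ℕ) [NeZero p] (B : ℕ) (hB : 0 < B)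
    (h1 : ∀ l : ℕ, l.Prime → ¬ l ∣ B → ∃ P : Ideal (𝓞 M), P.IsPrime ∧ Ideal.absNorm P = l)
    (h2 : ∀ l : ℕ, l.Prime → ¬ l ∣ B → (l : ZMod p) = 1 → ∃ P Q : Ideal (𝓞 M), P ≠ Q ∧
      (P.IsPrime ∧ Ideal.absNorm P = l) ∧ (Q.IsPrime ∧ Ideal.absNorm Q = l)) : False := by
  classical
  choose! P hP using h1
  have h2' : ∀ l : ℕ, l.Prime → ¬ l ∣ B → (l : ZMod p) = 1 → ∃ Q : Ideal (𝓞 M),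
      Q ≠ P l ∧ Q.IsPrime ∧ Ideal.absNorm Q = l := by
    intro l hl hlB hl1
    obtain ⟨A, C, hAC, hA, hC⟩ := h2 l hl hlB hl1
    by_cases h : A = P l
    · exact ⟨C, by rw [← h]; exact hAC.symm, hC⟩
    · exact ⟨A, h, hA⟩
  choose! Q hQ using h2'
  have hmax : ∀ l : ℕ, l.Prime → ∀ I : Ideal (𝓞 M), I.IsPrime → Ideal.absNorm I = l →
      I.IsMaximal := by
    intro l hl I hI hIl
    refine hI.isMaximal ?_
    rintro rfl
    rw [Ideal.absNorm_bot] at hIl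
    exact hl.ne_zero hIl.symm
  have hD : ∀ d : ℕ, d ≠ 0 → d.Coprime B → ∃ D : Ideal (𝓞 M), Ideal.absNorm D = d ∧
      ∀ I : Ideal (𝓞 M), I.IsPrime → D ≤ I → ∃ q : ℕ, q.Prime ∧ ¬ q ∣ B ∧ I = P q := by
    intro d
    induction d using Nat.recOnMul with
    | zero => intro h; exact absurd rfl h
    | one =>
      intro _ _
      refine ⟨⊤, by simp, fun I hI h => ?_⟩
      exact absurd (top_le_iff.mp h) hI.ne_top
    | prime q hq =>
      intro _ hqB
      have hqB' : ¬ q ∣ B := (Nat.Prime.coprime_iff_not_dvd hq).mp hqB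
      obtain ⟨ha, hb⟩ := hP q hq hqB'
      refine ⟨P q, hb, fun I hI h => ⟨q, hq, hqB', ?_⟩⟩
      exact ((hmax q hq _ ha hb).eq_of_le hI.ne_top h).symm
    | mul a b iha ihb =>
      intro h0 hc
      obtain ⟨Da, ha1, ha2⟩ := iha (left_ne_zero_of_mul h0) (Nat.Coprime.coprime_mul_right hc)
      obtain ⟨Db, hb1, hb2⟩ := ihb (right_ne_zero_of_mul h0) (Nat.Coprime.coprime_mul_left hc)
      refine ⟨Da * Db, by rw [map_mul, ha1, hb1], fun I hI h => ?_⟩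
      rcases (hI.mul_le).mp h with h | h
      · exact ha2 I hI h
      · exact hb2 I hI h
  choose! D hDn hDp using hD
  have hcop : ∀ k : ℕ, (1 + B * k).Coprime B := by
    intro k; simp
  -- the limit
  obtain ⟨κ, hκ⟩ : ∃ κ : ℝ, Tendsto (fun s : ℝ ↦
      (Nat.card {I : Ideal (𝓞 M) // (Ideal.absNorm I : ℝ) ≤ s} : ℝ) / s) atTop (𝓝 κ) :=
    ⟨_, NumberField.Ideal.tendsto_norm_le_div_atTop M⟩
  have hbound : ∀ T : Finset ℕ, (∀ l ∈ T, l.Prime ∧ ¬ l ∣ B ∧ (l : ZMod p) = 1) →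
      ∑ l ∈ T, (1 / (l : ℝ)) ≤ B * κ := by
    intro T hT
    set W := ∏ l ∈ T, l with hW
    have hWpos : 0 < W := Finset.prod_pos fun l hl => (hT l hl).1.pos
    have hdiv : ∀ l ∈ T, l ∣ W := fun l hl => Finset.dvd_prod_of_mem _ hl
    have hcard : ∀ N : ℕ, 0 < N → (N * W : ℝ) * ∑ l ∈ T, (1 / (l : ℝ)) ≤
        Nat.card {I : Ideal (𝓞 M) // (Ideal.absNorm I : ℝ) ≤ ((N * (B * W) : ℕ) : ℝ)} := by
      intro N hN
      let E : Finset (Σ _ : ℕ, ℕ) := T.sigma fun l => Finset.range (N * (W / l))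
      have hEcard : (E.card : ℝ) = (N * W : ℝ) * ∑ l ∈ T, (1 / (l : ℝ)) := by
        rw [Finset.card_sigma, Finset.mul_sum]
        push_cast
        refine Finset.sum_congr rfl fun l hl => ?_
        rw [Finset.card_range, Nat.cast_mul, Nat.cast_div (hdiv l hl)]
        · ring
        · exact_mod_cast (hT l hl).1.ne_zero
      rw [← hEcard]
      have hfin : Finite {I : Ideal (𝓞 M) // (Ideal.absNorm I : ℝ) ≤ ((N * (B * W) : ℕ) : ℝ)} := by
        simp_rw [Nat.cast_le]
        exact Ideal.finite_setOfPred_absNorm_le _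
      let F : E → {I : Ideal (𝓞 M) // (Ideal.absNorm I : ℝ) ≤ ((N * (B * W) : ℕ) : ℝ)} :=
        fun x => ⟨D (1 + B * x.1.2) * Q x.1.1, by
          obtain ⟨⟨l, k⟩, hx⟩ := x
          simp only [E, Finset.mem_sigma, Finset.mem_range] at hx
          obtain ⟨hl, hk⟩ := hx
          obtain ⟨hl1, hl2, hl3⟩ := hT l hl
          rw [Nat.cast_le, map_mul, hDn _ (by omega) (hcop k), (hQ l hl1 hl2 hl3).2.2]
          obtain ⟨w, hw⟩ := hdiv l hl
          rw [hw, Nat.mul_div_cancel_left _ hl1.pos] at hk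
          rw [hw]
          calc (1 + B * k) * l ≤ (B * (k + 1)) * l := by
                gcongr; rw [mul_add]; omega
            _ ≤ (B * (N * w)) * l := by gcongr; omega
            _ = _ := by ring⟩
      have hF : Function.Injective F := by
        rintro ⟨⟨l, k⟩, hx⟩ ⟨⟨l', k'⟩, hx'⟩ h
        simp only [E, Finset.mem_sigma, Finset.mem_range] at hx hx'
        obtain ⟨hl1, hl2, hl3⟩ := hT l hx.1
        obtain ⟨hl1', hl2', hl3'⟩ := hT l' hx'.1
        have heq : D (1 + B * k) * Q l = D (1 + B * k') * Q l' := congrArg Subtype.val h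
        obtain ⟨q1, q2, q3⟩ := hQ l hl1 hl2 hl3
        obtain ⟨q1', q2', q3'⟩ := hQ l' hl1' hl2' hl3'
        have hll : l = l' := by
          have hle : D (1 + B * k') * Q l' ≤ Q l := heq ▸ Ideal.mul_le_right
          rcases q2.mul_le.mp hle with h | h
          · obtain ⟨q, hq, hqB, hqe⟩ := hDp _ (by omega) (hcop k') _ q2 h
            have : q = l := by rw [← q3, hqe, (hP q hq hqB).2]
            subst this
            exact absurd hqe q1
          · have := (hmax l' hl1' _ q2' q3').eq_of_le q2.ne_top h
            rw [← q3, ← q3', this]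
        subst hll
        have hn := congrArg Ideal.absNorm heq
        rw [map_mul, map_mul, hDn _ (by omega) (hcop k), hDn _ (by omega) (hcop k'), q3] at hn
        have := Nat.eq_of_mul_eq_mul_right hl1.pos hn
        have : k = k' := Nat.eq_of_mul_eq_mul_left hB (by omega)
        subst this
        rfl
      have := Nat.card_le_card_of_injective F hF
      rw [Nat.card_eq_fintype_card, Fintype.card_coe] at this
      exact_mod_cast this
    have hBW : (0:ℝ) < B * W := by exact_mod_cast Nat.mul_pos hB hWpos
    have ht : Tendsto (fun N : ℕ => ((N * (B * W) : ℕ) : ℝ)) atTop atTop := by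
      push_cast
      exact (tendsto_natCast_atTop_atTop (R := ℝ)).atTop_mul_const hBW
    have hk2 := hκ.comp ht
    have : (∑ l ∈ T, (1 / (l : ℝ))) / B ≤ κ := by
      refine ge_of_tendsto hk2 ?_
      filter_upwards [eventually_gt_atTop 0] with N hN
      have hN' : (0:ℝ) < N := by exact_mod_cast hN
      have hB' : (0:ℝ) < B := by exact_mod_cast hB
      have hW' : (0:ℝ) < W := by exact_mod_cast hWpos
      simp only [Function.comp]
      rw [le_div_iff₀ (by push_cast; positivity)]
      refine le_trans (le_of_eq ?_) (hcard N hN)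
      push_cast
      field_simp
    have hB' : (0:ℝ) < B := by exact_mod_cast hB
    rwa [div_le_iff₀ hB', mul_comm] at this
  have hs : Summable (fun n : ℕ =>
      if n.Prime ∧ (n : ZMod p) = 1 ∧ ¬ n ∣ B then 1 / (n : ℝ) else 0) := by
    refine summable_of_sum_le (c := B * κ) (fun n => by positivity) fun u => ?_
    rw [← Finset.sum_filter]
    refine hbound _ fun l hl => ?_
    rw [Finset.mem_filter] at hl
    tauto
  apply aux_not_summable_prime_inv p
  have hs2 : Summable (fun n : ℕ =>
      if n.Prime ∧ (n : ZMod p) = 1 ∧ n ∣ B then 1 / (n : ℝ) else 0) := by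
    refine summable_of_ne_finset_zero (s := B.divisors) fun n hn => ?_
    rw [if_neg]
    rintro ⟨_, _, h⟩
    exact hn (Nat.mem_divisors.mpr ⟨h, hB.ne'⟩)
  refine (hs.add hs2).congr fun n => ?_
  by_cases h : n ∣ B <;> simp [h]



lemma aux_ker_prime {K : Type*} [Field K] [NumberField K] (l : ℕ) [Fact l.Prime]
    (φ : 𝓞 K →+* ZMod l) : (RingHom.ker φ).IsPrime ∧ Ideal.absNorm (RingHom.ker φ) = l := by
  refine ⟨RingHom.ker_isPrime φ, ?_⟩
  have hs : Function.Surjective φ := ZMod.ringHom_surjective φ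
  rw [Ideal.absNorm_apply, Submodule.cardQuot_apply]
  have := Nat.card_congr (RingHom.quotientKerEquivOfSurjective hs).toEquiv
  rw [Nat.card_zmod] at this
  exact this

lemma aux_minpoly_int {K : Type*} [Field K] [NumberField K] (α : 𝓞 K) (f : ℤ[X])
    (hf : minpoly ℚ (α : K) = f.map (Int.castRingHom ℚ)) : minpoly ℤ α = f := by
  have h := minpoly.isIntegrallyClosed_eq_field_fractions ℚ K (RingOfIntegers.isIntegral α)
  apply Polynomial.map_injective (Int.castRingHom ℚ) Int.cast_injective
  rw [← hf]
  exact h.symm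

theorem aux_power_residue (p : ℕ) (hp : p.Prime) (m : ℤ) (hm : ∀ k : ℤ, k ^ p ≠ m)
    (B : ℕ) (hB : 0 < B) :
    ∃ l : ℕ, l.Prime ∧ ¬ l ∣ B ∧ ∀ x : ZMod l, x ^ p ≠ (m : ZMod l) := by
  by_contra hcon
  push Not at hcon
  have hm0 : m ≠ 0 := fun h => hm 0 (by rw [h, zero_pow hp.ne_zero])
  have hirr : Irreducible (X ^ p - C (m : ℚ) : ℚ[X]) := by
    refine X_pow_sub_C_irreducible_of_prime hp fun b hb => ?_
    have hbi : IsIntegral ℤ b := by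
      refine IsIntegral.of_pow hp.pos (?_ : IsIntegral ℤ (b ^ p))
      rw [hb]
      exact isIntegral_algebraMap (R := ℤ) (x := m)
    obtain ⟨k, hk⟩ := IsIntegrallyClosed.isIntegral_iff.mp hbi
    apply hm k
    have : ((k ^ p : ℤ) : ℚ) = m := by rw [← hb, ← hk]; simp
    exact_mod_cast this
  have : Fact (Irreducible (X ^ p - C (m : ℚ) : ℚ[X])) := ⟨hirr⟩
  let M := AdjoinRoot (X ^ p - C (m : ℚ) : ℚ[X])
  have hmon : (X ^ p - C (m : ℚ) : ℚ[X]).Monic := monic_X_pow_sub_C _ hp.ne_zero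
  have : FiniteDimensional ℚ M := hmon.finite_adjoinRoot
  haveI : NumberField M := { to_charZero := charZero_of_injective_algebraMap (algebraMap ℚ M).injective
                             to_finiteDimensional := inferInstance }
  let a : M := AdjoinRoot.root _
  have hap : a ^ p = (m : M) := by
    have h := AdjoinRoot.eval₂_root (X ^ p - C (m : ℚ) : ℚ[X])
    rw [eval₂_sub, eval₂_pow, eval₂_X, eval₂_C, sub_eq_zero] at h
    rw [show a ^ p = _ from h]; simp
  have hai : IsIntegral ℤ a := by
    refine IsIntegral.of_pow hp.pos ?_
    rw [hap]
    exact isIntegral_algebraMap (R := ℤ) (x := m)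
  let α : 𝓞 M := ⟨a, hai⟩
  have hmin : minpoly ℤ α = X ^ p - C m := by
    apply aux_minpoly_int
    have : minpoly ℚ a = X ^ p - C (m : ℚ) := by
      refine (minpoly.eq_of_irreducible_of_monic hirr ?_ hmon).symm
      simp [hap]
    simp only [Polynomial.map_sub, Polynomial.map_pow, map_X, map_C]
    exact this
  have hadj : Algebra.adjoin ℚ {(α : M)} = ⊤ := AdjoinRoot.adjoinRoot_eq_top
  have hBpos : 0 < B * (p * m.natAbs) :=
    Nat.mul_pos hB (Nat.mul_pos hp.pos (Int.natAbs_pos.mpr hm0))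
  have : NeZero p := ⟨hp.ne_zero⟩
  have hdv : ∀ l : ℕ, ¬ l ∣ B * (p * m.natAbs) → ¬ l ∣ B ∧ ¬ l ∣ p ∧ ¬ l ∣ m.natAbs := by
    intro l h
    refine ⟨fun h' => h (h'.mul_right _), fun h' => h ((h'.mul_right _).mul_left _),
      fun h' => h ((h'.mul_left _).mul_left _)⟩
  have hr0 : ∀ l : ℕ, ∀ _ : Fact l.Prime, ¬ l ∣ B * (p * m.natAbs) → ∀ r : ZMod l,
      r ^ p = (m : ZMod l) → r ≠ 0 := by
    intro l hl hlB r hr h0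
    rw [h0, zero_pow hp.ne_zero] at hr
    have := (ZMod.intCast_zmod_eq_zero_iff_dvd m l).mp hr.symm
    exact (hdv l hlB).2.2 (Int.natCast_dvd.mp this)
  have hhom : ∀ l : ℕ, ∀ _ : Fact l.Prime, ¬ l ∣ B * (p * m.natAbs) → ∀ r : ZMod l,
      r ^ p = (m : ZMod l) → ∃ φ : 𝓞 M →+* ZMod l, φ α = r := by
    intro l hl hlB r hr
    refine aux_hom_of_simple_root α hadj l r ?_ ?_
    · rw [hmin]; simp [hr]
    · rw [hmin]
      have hp' : (p : ZMod l) ≠ 0 := by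
        rw [Ne, ZMod.natCast_eq_zero_iff]; exact (hdv l hlB).2.1
      have := hr0 l hl hlB r hr
      simp [derivative_X_pow, hp', this]
  refine aux_count (M := M) p _ hBpos ?_ ?_
  · intro l hl hlB
    have : Fact l.Prime := ⟨hl⟩
    obtain ⟨r, hr⟩ := hcon l hl (hdv l hlB).1
    obtain ⟨φ, hφ⟩ := hhom l ⟨hl⟩ hlB r hr
    exact ⟨_, aux_ker_prime l φ⟩
  · intro l hl hlB hl1
    have : Fact l.Prime := ⟨hl⟩
    have : Fact p.Prime := ⟨hp⟩
    obtain ⟨r, hr⟩ := hcon l hl (hdv l hlB).1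
    obtain ⟨ζ, hζ⟩ : ∃ ζ : (ZMod l)ˣ, orderOf ζ = p := by
      refine exists_prime_orderOf_dvd_card p ?_
      rw [ZMod.card_units]
      have h1 : ((l - 1 : ℕ) : ZMod p) = 0 := by
        rw [Nat.cast_sub hl.one_le, hl1]; simp
      exact (ZMod.natCast_eq_zero_iff _ _).mp h1
    have hζp : ((ζ : ZMod l)) ^ p = 1 := by
      rw [← Units.val_pow_eq_pow_val, ← hζ, pow_orderOf_eq_one]; rfl
    have hζ1 : (ζ : ZMod l) ≠ 1 := by
      intro h
      have : ζ = 1 := Units.ext h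
      rw [this, orderOf_one] at hζ
      exact hp.one_lt.ne hζ
    have hr' : (r * ζ) ^ p = (m : ZMod l) := by rw [mul_pow, hζp, mul_one, hr]
    have hne : r * ζ ≠ r := by
      intro h
      exact hζ1 (mul_left_cancel₀ (hr0 l ⟨hl⟩ hlB r hr) (by rw [h, mul_one]))
    obtain ⟨φ, hφ⟩ := hhom l ⟨hl⟩ hlB r hr
    obtain ⟨φ', hφ'⟩ := hhom l ⟨hl⟩ hlB _ hr'
    refine ⟨_, _, ?_, aux_ker_prime l φ, aux_ker_prime l φ'⟩
    intro hk
    have : α - (r.val : 𝓞 M) ∈ RingHom.ker φ := by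
      rw [RingHom.mem_ker, map_sub, map_natCast, hφ, ZMod.natCast_zmod_val, sub_self]
    rw [hk, RingHom.mem_ker, map_sub, map_natCast, hφ', ZMod.natCast_zmod_val, sub_eq_zero] at this
    exact hne this



theorem aux_not_pow (p : ℕ) (hp : p.Prime) (e : ℤ) (he : e = 1 ∨ e = -1) (u v : ℕ)
    (h : ¬ (p ∣ u ∧ p ∣ v)) (k : ℤ) : k ^ p ≠ e * 2 ^ u * 3 ^ v := by
  intro hk
  apply h
  have hk' : k.natAbs ^ p = 2 ^ u * 3 ^ v := by
    have := congrArg Int.natAbs hk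
    rw [Int.natAbs_pow, Int.natAbs_mul, Int.natAbs_mul, Int.natAbs_pow, Int.natAbs_pow] at this
    rcases he with rfl | rfl <;> simpa using this
  have h2 := congrArg (fun z => z.factorization 2) hk'
  have h3 := congrArg (fun z => z.factorization 3) hk'
  simp only [Nat.factorization_pow, Nat.factorization_mul (pow_ne_zero u (two_ne_zero)) (pow_ne_zero v (three_ne_zero)), Nat.prime_two.factorization, Nat.prime_three.factorization] at h2 h3
  simp [Finsupp.single_apply] at h2 h3
  exact ⟨⟨_, h2.symm⟩, ⟨_, h3.symm⟩⟩

theorem aux_exists_D (n : ℕ) : ∃ D : ℕ, 0 < D ∧ Nat.Coprime D 78 ∧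
    ∀ p : ℕ, p.Prime → p ∣ n → n ≠ 0 → ∀ e : ℤ, (e = 1 ∨ e = -1) → ∀ u v : ℕ,
      (∀ l : ℕ, l.Prime → l ∣ D → ∃ x : ZMod l, x ^ p = ((e * 2 ^ u * 3 ^ v : ℤ) : ZMod l)) →
      p ∣ u ∧ p ∣ v := by
  classical
  have key : ∀ q : ℕ × ℤ × ℕ × ℕ, ∃ l : ℕ, l.Prime ∧ ¬ l ∣ 78 ∧
      (q.1.Prime → (q.2.1 = 1 ∨ q.2.1 = -1) → ¬ (q.1 ∣ q.2.2.1 ∧ q.1 ∣ q.2.2.2) →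
        ∀ x : ZMod l, x ^ q.1 ≠ ((q.2.1 * 2 ^ q.2.2.1 * 3 ^ q.2.2.2 : ℤ) : ZMod l)) := by
    rintro ⟨p, e, u, v⟩
    by_cases hq : p.Prime ∧ (e = 1 ∨ e = -1) ∧ ¬ (p ∣ u ∧ p ∣ v)
    · obtain ⟨l, hl, hB, hx⟩ := aux_power_residue p hq.1 (e * 2 ^ u * 3 ^ v)
        (aux_not_pow p hq.1 e hq.2.1 u v hq.2.2) 78 (by norm_num)
      exact ⟨l, hl, hB, fun _ _ _ => hx⟩
    · refine ⟨5, by norm_num, by norm_num, fun h1 h2 h3 => absurd ⟨h1, h2, h3⟩ hq⟩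
  choose f hf1 hf2 hf3 using key
  let T : Finset (ℕ × ℤ × ℕ × ℕ) :=
    n.primeFactors ×ˢ ({1, -1} : Finset ℤ) ×ˢ Finset.range n ×ˢ Finset.range n
  refine ⟨∏ q ∈ T, f q, Finset.prod_pos fun q _ => (hf1 q).pos, ?_, ?_⟩
  · exact Nat.Coprime.prod_left fun q _ => (Nat.Prime.coprime_iff_not_dvd (hf1 q)).mpr (hf2 q)
  · intro p hp hpn hn e he u v h
    by_contra hcon
    have hpn' : p ≤ n := Nat.le_of_dvd (Nat.pos_of_ne_zero hn) hpn
    let q : ℕ × ℤ × ℕ × ℕ := (p, e, u % p, v % p)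
    have hq : q ∈ T := by
      simp only [T, q, Finset.mem_product, Nat.mem_primeFactors, Finset.mem_range]
      refine ⟨⟨hp, hpn, hn⟩, by simpa using he, ?_, ?_⟩
      · exact (Nat.mod_lt _ hp.pos).trans_le hpn'
      · exact (Nat.mod_lt _ hp.pos).trans_le hpn'
    obtain ⟨x, hx⟩ := h (f q) (hf1 q) (Finset.dvd_prod_of_mem f hq)
    have : Fact (f q).Prime := ⟨hf1 q⟩
    have h78 := hf2 q
    have h2 : (2 : ZMod (f q)) ≠ 0 := by
      intro h0
      apply h78
      have : ((2 : ℕ) : ZMod (f q)) = 0 := by exact_mod_cast h0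
      exact ((ZMod.natCast_eq_zero_iff _ _).mp this).trans (by norm_num)
    have h3 : (3 : ZMod (f q)) ≠ 0 := by
      intro h0
      apply h78
      have : ((3 : ℕ) : ZMod (f q)) = 0 := by exact_mod_cast h0
      exact ((ZMod.natCast_eq_zero_iff _ _).mp this).trans (by norm_num)
    refine hf3 q hp he ?_ (x * ((2 : ZMod (f q)) ^ (u / p) * 3 ^ (v / p))⁻¹) ?_
    · simp only [q]
      rwa [Nat.dvd_mod_iff (dvd_refl p), Nat.dvd_mod_iff (dvd_refl p)]
    · simp only [q]
      rw [mul_pow, inv_pow]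
      rw [mul_inv_eq_iff_eq_mul₀ (by positivity), hx]
      push_cast
      conv_lhs => rw [← Nat.mod_add_div u p, ← Nat.mod_add_div v p]
      ring



theorem aux_strip {R : Type*} [CommRing R] [IsDomain R] [IsIntegrallyClosed R] (p : ℕ) (hp : p ≠ 0)
    (w b Z : R) (hw : w ≠ 0) (h : b ^ p = w ^ p * Z) : ∃ g : R, g ^ p = Z := by
  obtain ⟨g, rfl⟩ := (IsIntegrallyClosed.pow_dvd_pow_iff hp).mp (⟨Z, h⟩ : w ^ p ∣ b ^ p)
  refine ⟨g, ?_⟩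
  rw [mul_pow] at h
  exact mul_left_cancel₀ (pow_ne_zero p hw) h

/-- Polynomial with integer coefficients. -/
noncomputable def auxP (A : ℤ) : ℤ[X] := X ^ 3 + C A * X ^ 2 + C (A - 3) * X - 1

theorem auxP_aeval {R : Type*} [CommRing R] (A : ℤ) (r : R) :
    aeval r (auxP A) = r ^ 3 + (A : R) * r ^ 2 + ((A : R) - 3) * r - 1 := by
  have h3 : aeval r (3 : ℤ[X]) = 3 := map_ofNat _ 3
  simp [auxP, h3]

theorem auxP_deriv {R : Type*} [CommRing R] (A : ℤ) (r : R) :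
    aeval r (derivative (auxP A)) = 3 * r ^ 2 + 2 * (A : R) * r + ((A : R) - 3) := by
  have h : derivative (auxP A) = C 3 * X ^ 2 + C (2 * A) * X + C (A - 3) := by
    simp only [auxP, derivative_sub, derivative_add, derivative_mul, derivative_C, derivative_X_pow,
      derivative_X, derivative_one, map_mul, map_ofNat, Nat.cast_ofNat]
    ring
  have h3 : aeval r (3 : ℤ[X]) = 3 := map_ofNat _ 3
  have h2 : aeval r (2 : ℤ[X]) = 2 := map_ofNat _ 2
  rw [h]
  simp [h2, h3]

instance auxFact13 : Fact (Nat.Prime 13) := ⟨by norm_num⟩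

theorem aux_main {K : Type*} [Field K] [NumberField K] (θ : 𝓞 K)
    (hadj : Algebra.adjoin ℚ {(θ : K)} = ⊤) (y n : ℕ) (hy : 0 < y) (A : ℤ)
    (hA : 2 * A = (y : ℤ) ^ n + 3) (hmin : minpoly ℤ θ = auxP A) (hn : n ≠ 0) (D : ℕ) (hDy : D ∣ y)
    (hD : Nat.Coprime D 78)
    (hres : ∀ p : ℕ, p.Prime → p ∣ n → n ≠ 0 → ∀ e : ℤ, (e = 1 ∨ e = -1) → ∀ u v : ℕ,
      (∀ l : ℕ, l.Prime → l ∣ D → ∃ x : ZMod l, x ^ p = ((e * 2 ^ u * 3 ^ v : ℤ) : ZMod l)) →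
      p ∣ u ∧ p ∣ v)
    (hy13 : (y : ZMod 13) = 1)
    (p : ℕ) (hp : p.Prime) (hpn : p ∣ n) (s : ℤ) (hs : s = 1 ∨ s = -1) (a b c d : ℕ) (β : 𝓞 K)
    (hβ : (s : 𝓞 K) * θ ^ a * (θ + 1) ^ b * (θ - 1) ^ c * (θ + 2) ^ d = β ^ p) :
    p ∣ a ∧ p ∣ b ∧ p ∣ c ∧ p ∣ d := by
  have heq : θ ^ 3 + (A : 𝓞 K) * θ ^ 2 + ((A : 𝓞 K) - 3) * θ - 1 = 0 := by
    rw [← auxP_aeval, ← hmin, minpoly.aeval]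
  have hA' : 2 * (A : 𝓞 K) = (y : 𝓞 K) ^ n + 3 := by exact_mod_cast congrArg (Int.cast : ℤ → 𝓞 K) hA
  obtain ⟨m, rfl⟩ := hpn
  have hid : (θ - 1) * ((θ + 2) * (2 * θ + 1)) = -(y : 𝓞 K) ^ (p * m) * (θ * (θ + 1)) := by
    linear_combination 2 * heq - (θ ^ 2 + θ) * hA'
  have hid2 : (θ + 2) * ((θ - 1) * (2 * θ + 1)) = -(y : 𝓞 K) ^ (p * m) * (θ * (θ + 1)) := by
    linear_combination hid
  have hy0 : (y : 𝓞 K) ≠ 0 := by exact_mod_cast hy.ne'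
  obtain ⟨q, hq⟩ : ∃ q, p = q + 1 := ⟨p - 1, (Nat.succ_pred_prime hp).symm⟩
  have hl : ∀ l : ℕ, l.Prime → l ∣ D → (2 : ZMod l) ≠ 0 ∧ (3 : ZMod l) ≠ 0 ∧
      (2 * (A : ZMod l) = 3) := by
    intro l hl hlD
    have hl78 : ¬ l ∣ 78 := fun h => hl.one_lt.ne' (Nat.dvd_one.mp (hD ▸ Nat.dvd_gcd hlD h))
    refine ⟨?_, ?_, ?_⟩
    · intro h0
      have : ((2 : ℕ) : ZMod l) = 0 := by exact_mod_cast h0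
      exact hl78 (((ZMod.natCast_eq_zero_iff _ _).mp this).trans (by norm_num))
    · intro h0
      have : ((3 : ℕ) : ZMod l) = 0 := by exact_mod_cast h0
      exact hl78 (((ZMod.natCast_eq_zero_iff _ _).mp this).trans (by norm_num))
    · have h1 : 2 * (A : ZMod l) = (y : ZMod l) ^ (p * m) + 3 := by
        exact_mod_cast congrArg (Int.cast : ℤ → ZMod l) hA
      have h2 : (y : ZMod l) = 0 := (ZMod.natCast_eq_zero_iff _ _).mpr (hlD.trans hDy)
      rw [h1, h2, zero_pow hn, zero_add]
  have hsign : ∀ k : ℕ, s * (-1) ^ k = 1 ∨ s * (-1) ^ k = -1 := by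
    intro k
    rcases hs with rfl | rfl <;> rcases neg_one_pow_eq_or ℤ k with h | h <;> simp [h]
  -- first congruences
  have h1 : p ∣ b + c ∧ p ∣ d + 2 * (c * q) := by
    obtain ⟨g, hg⟩ := aux_strip p hp.ne_zero ((y : 𝓞 K) ^ (m * c)) (β * ((θ + 2) * (2 * θ + 1)) ^ c)
      ((s : 𝓞 K) * (-1) ^ c * θ ^ (a + c) * (θ + 1) ^ (b + c) * (θ + 2) ^ d *
        ((θ + 2) * (2 * θ + 1)) ^ (c * q)) (pow_ne_zero _ hy0) (by
        have e1 : ((θ - 1) * ((θ + 2) * (2 * θ + 1))) ^ c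
            = (-(y : 𝓞 K) ^ (p * m) * (θ * (θ + 1))) ^ c := by rw [hid]
        have e2 : ((y : 𝓞 K) ^ (m * c)) ^ p = (y : 𝓞 K) ^ (p * m * c) := by rw [← pow_mul]; ring
        have e3 : (-(y : 𝓞 K) ^ (p * m) * (θ * (θ + 1))) ^ c
          = (-1) ^ c * (y : 𝓞 K) ^ (p * m * c) * θ ^ c * (θ + 1) ^ c := by
            rw [neg_mul, neg_pow, mul_pow, mul_pow, ← pow_mul]; ring
        have e4 : (((θ + 2) * (2 * θ + 1)) ^ c) ^ p =
          ((θ + 2) * (2 * θ + 1)) ^ c * ((θ + 2) * (2 * θ + 1)) ^ (c * q) := by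
            rw [← pow_mul, ← pow_add, hq]; ring
        rw [mul_pow, ← hβ, e2, e4]
        rw [e3, mul_pow] at e1
        generalize ((θ + 2) * (2 * θ + 1)) ^ c = Q at *
        generalize ((θ + 2) * (2 * θ + 1)) ^ (c * q) = Q' at *
        rw [pow_add, pow_add]
        linear_combination (s : 𝓞 K) * θ ^ a * (θ + 1) ^ b * (θ + 2) ^ d * Q' * e1)
    refine hres p hp ⟨m, rfl⟩ hn (s * (-1) ^ c) (hsign c) _ _ ?_
    intro l hlp hlD
    obtain ⟨h2, h3, hAl⟩ := hl l hlp hlD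
    have : Fact l.Prime := ⟨hlp⟩
    obtain ⟨φ, hφ⟩ := aux_hom_of_simple_root θ hadj l 1 (by
      rw [hmin, auxP_aeval]; linear_combination hAl) (by
      rw [hmin, auxP_deriv]
      intro h0
      apply mul_ne_zero h3 h3
      linear_combination 2 * h0 - 3 * hAl)
    refine ⟨φ g, ?_⟩
    rw [← map_pow, hg]
    simp only [map_mul, map_pow, map_add, map_neg, map_one, map_intCast, map_ofNat, hφ]
    push_cast
    rw [pow_add (3 : ZMod l)]
    have e1 : (1 + 1 : ZMod l) = 2 := by ring
    have e2 : ((1 + 2) * (2 * 1 + 1) : ZMod l) = 3 ^ 2 := by ring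
    have e3 : (1 + 2 : ZMod l) = 3 := by ring
    rw [e2, e1, e3, one_pow, ← pow_mul]
    ring
  have h2 : p ∣ a + d ∧ p ∣ c + 2 * (d * q) := by
    obtain ⟨g, hg⟩ := aux_strip p hp.ne_zero ((y : 𝓞 K) ^ (m * d)) (β * ((θ - 1) * (2 * θ + 1)) ^ d)
      ((s : 𝓞 K) * (-1) ^ d * θ ^ (a + d) * (θ + 1) ^ (b + d) * (θ - 1) ^ c *
        ((θ - 1) * (2 * θ + 1)) ^ (d * q)) (pow_ne_zero _ hy0) (by
        have e1 : ((θ + 2) * ((θ - 1) * (2 * θ + 1))) ^ d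
            = (-(y : 𝓞 K) ^ (p * m) * (θ * (θ + 1))) ^ d := by rw [hid2]
        have e2 : ((y : 𝓞 K) ^ (m * d)) ^ p = (y : 𝓞 K) ^ (p * m * d) := by rw [← pow_mul]; ring
        have e3 : (-(y : 𝓞 K) ^ (p * m) * (θ * (θ + 1))) ^ d
          = (-1) ^ d * (y : 𝓞 K) ^ (p * m * d) * θ ^ d * (θ + 1) ^ d := by
            rw [neg_mul, neg_pow, mul_pow, mul_pow, ← pow_mul]; ring
        have e4 : (((θ - 1) * (2 * θ + 1)) ^ d) ^ p =
          ((θ - 1) * (2 * θ + 1)) ^ d * ((θ - 1) * (2 * θ + 1)) ^ (d * q) := by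
            rw [← pow_mul, ← pow_add, hq]; ring
        rw [mul_pow, ← hβ, e2, e4]
        rw [e3, mul_pow] at e1
        generalize ((θ - 1) * (2 * θ + 1)) ^ d = Q at *
        generalize ((θ - 1) * (2 * θ + 1)) ^ (d * q) = Q' at *
        rw [pow_add, pow_add]
        linear_combination (s : 𝓞 K) * θ ^ a * (θ + 1) ^ b * (θ - 1) ^ c * Q' * e1)
    refine hres p hp ⟨m, rfl⟩ hn (s * (-1) ^ (d + (a + d) + (b + d) + c)) (hsign _) _ _ ?_
    intro l hlp hlD
    obtain ⟨h2, h3, hAl⟩ := hl l hlp hlD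
    have : Fact l.Prime := ⟨hlp⟩
    obtain ⟨φ, hφ⟩ := aux_hom_of_simple_root θ hadj l (-2) (by
      rw [hmin, auxP_aeval]; linear_combination hAl) (by
      rw [hmin, auxP_deriv]
      intro h0
      apply mul_ne_zero h3 h3
      linear_combination 2 * h0 + 3 * hAl)
    refine ⟨φ g, ?_⟩
    rw [← map_pow, hg]
    simp only [map_mul, map_pow, map_add, map_sub, map_neg, map_one, map_intCast, map_ofNat, hφ]
    have e1 : (-2 + 1 : ZMod l) = -1 := by ring
    have e2 : (-2 - 1 : ZMod l) = (-1) * 3 := by ring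
    have e3 : (-1 * 3 * (2 * (-2) + 1) : ZMod l) = 3 ^ 2 := by ring
    have e4 : (-2 : ZMod l) = (-1) * 2 := by ring
    rw [e1, e2, e3, e4]
    push_cast
    simp only [mul_pow, ← pow_mul, pow_add]
    ring
  obtain ⟨hbc, hdc⟩ := h1
  obtain ⟨had, hcd⟩ := h2
  have hdc' : (p : ℤ) ∣ d - 2 * c := by
    have : (p : ℤ) ∣ d + 2 * (c * q) := by exact_mod_cast hdc
    have h : ((d : ℤ) - 2 * c) = (d + 2 * (c * q)) - p * (2 * c) := by rw [hq]; push_cast; ring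
    rw [h]; exact dvd_sub this (dvd_mul_right _ _)
  have hcd' : (p : ℤ) ∣ c - 2 * d := by
    have : (p : ℤ) ∣ c + 2 * (d * q) := by exact_mod_cast hcd
    have h : ((c : ℤ) - 2 * d) = (c + 2 * (d * q)) - p * (2 * d) := by rw [hq]; push_cast; ring
    rw [h]; exact dvd_sub this (dvd_mul_right _ _)
  have hc : p ∣ c := by
    by_cases hp3 : p = 3
    · subst hp3
      have hA13 : (A : ZMod 13) = 2 := by
        have h1 : 2 * (A : ZMod 13) = (y : ZMod 13) ^ (3 * m) + 3 := by
          exact_mod_cast congrArg (Int.cast : ℤ → ZMod 13) hA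
        rw [hy13, one_pow] at h1
        have h7 : (7 * 2 : ZMod 13) = 1 := by decide
        calc (A : ZMod 13) = 7 * 2 * A := by rw [h7, one_mul]
          _ = 7 * (1 + 3) := by rw [mul_assoc, h1]
          _ = 2 := by decide
      obtain ⟨φ, hφ⟩ := aux_hom_of_simple_root θ hadj 13 2 (by
        rw [hmin, auxP_aeval, hA13]; decide) (by
        rw [hmin, auxP_deriv, hA13]; decide)
      have h := congrArg (fun z => φ z ^ 4) hβ
      simp only [map_mul, map_pow, map_add, map_sub, map_one, map_intCast, map_ofNat, hφ] at h
      have hne : φ β ≠ 0 := by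
        intro h0
        rw [h0] at h
        have hs' : ((s : ℤ) : ZMod 13) ^ 4 = 1 := by rcases hs with rfl | rfl <;> push_cast <;> ring
        simp only [mul_pow, hs'] at h
        norm_num at h
        have e2 : (2 : ZMod 13) ≠ 0 := by decide
        have e3 : (3 : ZMod 13) ≠ 0 := by decide
        have e4 : (4 : ZMod 13) ≠ 0 := by decide
        simp [e2, e3, e4] at h
      have h12 : (φ β ^ 3) ^ 4 = 1 := by
        rw [← pow_mul]; exact ZMod.pow_card_sub_one_eq_one hne
      rw [h12] at h
      have hs' : ((s : ℤ) : ZMod 13) ^ 4 = 1 := by rcases hs with rfl | rfl <;> push_cast <;> ring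
      have e3 : (2 + 1 : ZMod 13) = 2 ^ 4 := by decide
      have e1 : (2 - 1 : ZMod 13) = 1 := by decide
      have e4 : (2 + 2 : ZMod 13) = 2 ^ 2 := by decide
      rw [e3, e1, e4] at h
      have hpow : (3 : ZMod 13) ^ (a + 4 * b + 2 * d) = 1 := by
        have e : (3 : ZMod 13) = 2 ^ 4 := by decide
        rw [e, ← h]
        simp only [mul_pow, hs', one_pow, ← pow_mul, pow_add]
        ring
      have hord : orderOf (3 : ZMod 13) = 3 := by
        have : Fact (Nat.Prime 3) := ⟨Nat.prime_three⟩
        exact orderOf_eq_prime (by decide) (by decide)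
      have := orderOf_dvd_of_pow_eq_one hpow
      rw [hord] at this
      omega
    · have h3 : (p : ℤ) ∣ 3 * c := by
        have h : (3 * c : ℤ) = -(c - 2 * d) - 2 * (d - 2 * c) := by ring
        rw [h]; exact dvd_sub (dvd_neg.mpr hcd') (hdc'.mul_left _)
      have h3' : p ∣ 3 * c := by exact_mod_cast h3
      rcases hp.dvd_mul.mp h3' with h | h
      · exact absurd ((Nat.prime_dvd_prime_iff_eq hp Nat.prime_three).mp h) hp3
      · exact h
  have hd : p ∣ d := (Nat.dvd_add_left ((hc.mul_right q).mul_left 2)).mp hdc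
  exact ⟨(Nat.dvd_add_left hd).mp had, (Nat.dvd_add_left hc).mp hbc, hc, hd⟩


theorem aux_group {G : Type*} [CommGroup G] (n : ℕ) (hn : n ≠ 0) (g h : G)
    (hp : ∀ p : ℕ, p.Prime → p ∣ n → ∀ a b : ℕ, g ^ (n / p * a) * h ^ (n / p * b) = 1 → p ∣ a ∧ p ∣ b)
    (i j : ℕ) (hij : g ^ i * h ^ j = 1) : n ∣ i ∧ n ∣ j := by
  set k := Nat.gcd (Nat.gcd i j) n with hk
  have hkn : k ∣ n := Nat.gcd_dvd_right _ _
  have hki : k ∣ i := (Nat.gcd_dvd_left _ _).trans (Nat.gcd_dvd_left _ _)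
  have hkj : k ∣ j := (Nat.gcd_dvd_left _ _).trans (Nat.gcd_dvd_right _ _)
  by_cases hkn' : k = n
  · exact ⟨hkn' ▸ hki, hkn' ▸ hkj⟩
  exfalso
  obtain ⟨q, hq⟩ := hkn
  have hq1 : q ≠ 1 := by rintro rfl; exact hkn' (by rw [hq, mul_one])
  obtain ⟨p, hpp, r, rfl⟩ := Nat.exists_prime_and_dvd hq1
  obtain ⟨i', hi⟩ := hki
  obtain ⟨j', hj⟩ := hkj
  have hk0 : 0 < k := Nat.pos_of_ne_zero (by rintro h0; rw [h0, zero_mul] at hq; exact hn hq)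
  have hnp : n / p = k * r := by
    rw [hq]; exact Nat.div_eq_of_eq_mul_left hpp.pos (by ring)
  have := hp p hpp ⟨k * r, by rw [hq]; ring⟩ i' j' (by
    rw [hnp]
    have h1 : k * r * i' = i * r := by rw [hi]; ring
    have h2 : k * r * j' = j * r := by rw [hj]; ring
    rw [h1, h2, pow_mul, pow_mul, ← mul_pow, hij, one_pow])
  have hd : k * p ∣ k := by
    conv_rhs => rw [hk]
    refine Nat.dvd_gcd (Nat.dvd_gcd ?_ ?_) ?_
    · rw [hi]; exact Nat.mul_dvd_mul_left k this.1
    · rw [hj]; exact Nat.mul_dvd_mul_left k this.2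
    · rw [hq]; exact ⟨r, by ring⟩
  have := Nat.le_of_dvd hk0 hd
  nlinarith [hpp.two_le]

theorem aux_rank {G : Type*} [CommGroup G] (n : ℕ) (hn : n ≠ 0) (g h : G) (hg : g ^ n = 1)
    (hh : h ^ n = 1) (H : ∀ i j : ℕ, g ^ i * h ^ j = 1 → n ∣ i ∧ n ∣ j) :
    HasZModRankGE G n 2 := by
  have : NeZero n := ⟨hn⟩
  have hlift : ∀ x : G, x ^ n = 1 → ∃ f : ZMod n →+ Additive G,
      ∀ k : ℕ, f (k : ZMod n) = Additive.ofMul (x ^ k) := by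
    intro x hx
    refine ⟨ZMod.lift n ⟨zmultiplesHom (Additive G) (Additive.ofMul x), ?_⟩, ?_⟩
    · simp only [zmultiplesHom_apply, natCast_zsmul]
      rw [← ofMul_pow, hx]; rfl
    · intro k
      have := ZMod.lift_coe n ⟨zmultiplesHom (Additive G) (Additive.ofMul x), (by
        simp only [zmultiplesHom_apply, natCast_zsmul]
        rw [← ofMul_pow, hx]; rfl)⟩ (k : ℤ)
      simpa using this
  obtain ⟨f1, hf1⟩ := hlift g hg
  obtain ⟨f2, hf2⟩ := hlift h hh
  let F : (Fin 2 → ZMod n) →+ Additive G :=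
    f1.comp (Pi.evalAddMonoidHom _ 0) + f2.comp (Pi.evalAddMonoidHom _ 1)
  refine ⟨AddMonoidHom.toMultiplicativeLeft F, ?_⟩
  rw [injective_iff_map_eq_one]
  intro v hv
  have hv' : f1 (v.toAdd 0) + f2 (v.toAdd 1) = 0 := hv
  have h1 := hf1 (v.toAdd 0).val
  have h2 := hf2 (v.toAdd 1).val
  rw [ZMod.natCast_zmod_val] at h1 h2
  rw [h1, h2] at hv'
  have := H _ _ (show g ^ (v.toAdd 0).val * h ^ (v.toAdd 1).val = 1 from hv')
  have e0 : v.toAdd 0 = 0 := by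
    rw [← ZMod.natCast_zmod_val (v.toAdd 0)]; exact (ZMod.natCast_eq_zero_iff _ _).mpr this.1
  have e1 : v.toAdd 1 = 0 := by
    rw [← ZMod.natCast_zmod_val (v.toAdd 1)]; exact (ZMod.natCast_eq_zero_iff _ _).mpr this.2
  apply Multiplicative.toAdd.injective
  funext t
  fin_cases t
  · exact e0
  · exact e1

theorem aux_rank_div {G : Type*} [CommGroup G] (n k : ℕ) (hn : n ≠ 0) (hk : k ≠ 0)
    (h : HasZModRankGE G (n * k) 2) : HasZModRankGE G n 2 := by
  obtain ⟨φ, hφ⟩ := h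
  have : NeZero (n * k) := ⟨mul_ne_zero hn hk⟩
  let E : Fin 2 → Multiplicative (Fin 2 → ZMod (n * k)) := fun t =>
    Multiplicative.ofAdd (Pi.single t (k : ZMod (n * k)))
  have hE : ∀ t, E t ^ n = 1 := by
    intro t
    simp only [E]
    rw [← ofAdd_nsmul, ← Pi.single_smul, nsmul_eq_mul, ← Nat.cast_mul, ZMod.natCast_self]
    simp
  refine aux_rank n hn (φ (E 0)) (φ (E 1)) ?_ ?_ ?_
  · rw [← map_pow, hE, map_one]
  · rw [← map_pow, hE, map_one]
  · intro i j hij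
    rw [← map_pow φ (E 0) i, ← map_pow φ (E 1) j, ← map_mul φ] at hij
    have h1 := (injective_iff_map_eq_one φ).mp hφ _ hij
    simp only [E] at h1
    rw [← ofAdd_nsmul, ← ofAdd_nsmul, ← ofAdd_add, ofAdd_eq_one] at h1
    have h0 := congrFun h1 0
    have h2 := congrFun h1 1
    rw [Pi.add_apply, Pi.smul_apply, Pi.smul_apply, Pi.single_eq_same,
      Pi.single_eq_of_ne (show (0 : Fin 2) ≠ 1 by decide), smul_zero, add_zero, nsmul_eq_mul,
      ← Nat.cast_mul, Pi.zero_apply] at h0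
    rw [Pi.add_apply, Pi.smul_apply, Pi.smul_apply, Pi.single_eq_same,
      Pi.single_eq_of_ne (show (1 : Fin 2) ≠ 0 by decide), smul_zero, zero_add, nsmul_eq_mul,
      ← Nat.cast_mul, Pi.zero_apply] at h2
    rw [ZMod.natCast_eq_zero_iff] at h0 h2
    exact ⟨Nat.dvd_of_mul_dvd_mul_right (Nat.pos_of_ne_zero hk) h0,
      Nat.dvd_of_mul_dvd_mul_right (Nat.pos_of_ne_zero hk) h2⟩

theorem aux_rank_card {G : Type*} [CommGroup G] [Finite G] (n : ℕ) (hn : n ≠ 0)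
    (h : HasZModRankGE G n 2) : n ≤ Nat.card G := by
  obtain ⟨φ, hφ⟩ := h
  have : NeZero n := ⟨hn⟩
  have := Nat.card_le_card_of_injective _ hφ
  have h2 : Nat.card (Multiplicative (Fin 2 → ZMod n)) = n ^ 2 := by
    rw [Nat.card_congr Multiplicative.toAdd, Nat.card_fun]
    simp
  nlinarith [Nat.pos_of_ne_zero hn]



theorem aux_units {K : Type*} [Field K] [NumberField K] (hr : NumberField.Units.rank K = 2)
    (hodd : Odd (Module.finrank ℚ K)) (p : ℕ) (hp : p.Prime) (e₁ e₂ : (𝓞 K)ˣ)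
    (hind : ∀ i j : ℕ, ∀ s : (𝓞 K)ˣ, (s = 1 ∨ s = -1) → ∀ ε : (𝓞 K)ˣ,
      s * e₁ ^ i * e₂ ^ j = ε ^ p → p ∣ i ∧ p ∣ j) (u : (𝓞 K)ˣ) :
    ∃ i j : ℕ, ∃ s ε : (𝓞 K)ˣ, (s = 1 ∨ s = -1) ∧ u = s * e₁ ^ i * e₂ ^ j * ε ^ p := by
  classical
  have : NeZero p := ⟨hp.ne_zero⟩
  let T : Subgroup (𝓞 K)ˣ := (powMonoidHom p).range ⊔ NumberField.Units.torsion K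
  obtain ⟨Q, instQ, π, hsurj, hker⟩ : ∃ (Q : Type _) (_ : CommGroup Q) (π : (𝓞 K)ˣ →* Q),
      Function.Surjective π ∧ ∀ x, π x = 1 ↔ x ∈ T :=
    ⟨(𝓞 K)ˣ ⧸ T, inferInstance, QuotientGroup.mk' T, QuotientGroup.mk'_surjective T,
      fun x => QuotientGroup.eq_one_iff x⟩
  have hT : ∀ x : (𝓞 K)ˣ, π x = 1 → ∃ s ε : (𝓞 K)ˣ, (s = 1 ∨ s = -1) ∧ x = s * ε ^ p := by
    intro x hx
    have hx' : x ∈ T := (hker x).mp hx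
    obtain ⟨a, ⟨ε, rfl⟩, z, hz, rfl⟩ := Subgroup.mem_sup.mp hx'
    refine ⟨z, ε, ?_, mul_comm _ _⟩
    exact NumberField.Units.torsion_eq_one_or_neg_one_of_odd_finrank hodd ⟨z, hz⟩
  have hpow : ∀ x : (𝓞 K)ˣ, π x ^ p = 1 := by
    intro x
    rw [← map_pow]
    exact (hker _).mpr (Subgroup.mem_sup_left ⟨x, rfl⟩)
  have htor : ∀ x : NumberField.Units.torsion K, π (x : (𝓞 K)ˣ) = 1 := by
    intro x
    exact (hker _).mpr (Subgroup.mem_sup_right x.2)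
  let F : (Fin (NumberField.Units.rank K) → ZMod p) → Q := fun v =>
    ∏ i, π (NumberField.Units.fundSystem K i) ^ (v i).val
  have hF : Function.Surjective F := by
    intro q
    obtain ⟨x, rfl⟩ := hsurj q
    obtain ⟨⟨ζ, e⟩, hx, -⟩ := NumberField.Units.exist_unique_eq_mul_prod K x
    refine ⟨fun i => (e i : ZMod p), ?_⟩
    rw [hx, map_mul, htor, one_mul, map_prod]
    refine Finset.prod_congr rfl fun i _ => ?_
    rw [map_zpow, ← zpow_natCast, ZMod.val_intCast]
    conv_rhs => rw [show (ζ, e).2 i = e i from rfl, ← Int.emod_add_mul_ediv (e i) p, zpow_add, zpow_mul, zpow_natCast, hpow, one_zpow,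
      mul_one]
  have : Finite Q := Finite.of_surjective F hF
  have hcard : Nat.card Q ≤ p ^ 2 := by
    refine (Nat.card_le_card_of_surjective F hF).trans ?_
    rw [Nat.card_fun]
    simp [hr]
  let H : Fin p × Fin p → Q := fun v => π e₁ ^ (v.1 : ℕ) * π e₂ ^ (v.2 : ℕ)
  have hH : Function.Injective H := by
    rintro ⟨i, j⟩ ⟨i', j'⟩ h
    have h' : π e₁ ^ (i : ℕ) * π e₂ ^ (j : ℕ) = π e₁ ^ (i' : ℕ) * π e₂ ^ (j' : ℕ) := h
    have hc : π (e₁ ^ (i + (p - i') : ℕ) * e₂ ^ (j + (p - j') : ℕ)) = 1 := by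
      rw [map_mul, map_pow, map_pow, pow_add, pow_add]
      calc _ = (π e₁ ^ (i : ℕ) * π e₂ ^ (j : ℕ)) * (π e₁ ^ (p - i' : ℕ) * π e₂ ^ (p - j' : ℕ)) :=
            mul_mul_mul_comm _ _ _ _
        _ = (π e₁ ^ (i' : ℕ) * π e₁ ^ (p - i' : ℕ)) * (π e₂ ^ (j' : ℕ) * π e₂ ^ (p - j' : ℕ)) := by
            rw [h', mul_mul_mul_comm]
        _ = 1 := by
            rw [← pow_add, ← pow_add, Nat.add_sub_cancel' i'.2.le, Nat.add_sub_cancel' j'.2.le,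
              hpow, hpow, one_mul]
    obtain ⟨s, ε, hs, hx⟩ := hT _ hc
    have hss : s * s = 1 := by rcases hs with rfl | rfl <;> simp
    have := hind _ _ s hs ε (by rw [mul_assoc, hx, ← mul_assoc, hss, one_mul])
    have hi := i.2
    have hi' := i'.2
    have hj := j.2
    have hj' := j'.2
    have key : ∀ a b : ℕ, a < p → b < p → p ∣ a + (p - b) → a = b := by
      rintro a b ha hb ⟨c, hc⟩
      rcases Nat.lt_or_ge c 1 with h0 | h0
      · have : c = 0 := by omega
        subst this; omega
      · rcases Nat.lt_or_ge c 2 with h1 | h1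
        · have : c = 1 := by omega
          subst this; omega
        · nlinarith [Nat.mul_le_mul_left p h1, Nat.sub_le p b]
    ext
    · exact key _ _ hi hi' this.1
    · exact key _ _ hj hj' this.2
  have hbij := Function.Injective.bijective_of_nat_card_le hH (by simpa [sq] using hcard)
  obtain ⟨⟨i, j⟩, hij⟩ := hbij.2 (π u)
  have hij' : π e₁ ^ (i : ℕ) * π e₂ ^ (j : ℕ) = π u := hij
  obtain ⟨s, ε, hs, hx⟩ := hT (u * (e₁ ^ (i : ℕ) * e₂ ^ (j : ℕ))⁻¹) (by
    rw [map_mul, map_inv, map_mul, map_pow, map_pow, hij', mul_inv_cancel])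
  refine ⟨i, j, s, ε, hs, ?_⟩
  rw [mul_inv_eq_iff_eq_mul] at hx
  rw [hx]
  simp only [mul_assoc, mul_comm, mul_left_comm]



theorem aux_class {K : Type*} [Field K] [NumberField K] (θ : 𝓞 K)
    (hadj : Algebra.adjoin ℚ {(θ : K)} = ⊤) (y n : ℕ) (hy : 0 < y) (A : ℤ)
    (hA : 2 * A = (y : ℤ) ^ n + 3) (hmin : minpoly ℤ θ = auxP A) (hn : n ≠ 0) (D : ℕ) (hDy : D ∣ y)
    (hD : Nat.Coprime D 78)
    (hres : ∀ p : ℕ, p.Prime → p ∣ n → n ≠ 0 → ∀ e : ℤ, (e = 1 ∨ e = -1) → ∀ u v : ℕ,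
      (∀ l : ℕ, l.Prime → l ∣ D → ∃ x : ZMod l, x ^ p = ((e * 2 ^ u * 3 ^ v : ℤ) : ZMod l)) →
      p ∣ u ∧ p ∣ v)
    (hy13 : (y : ZMod 13) = 1) (hy3 : ¬ 3 ∣ y)
    (hr : NumberField.Units.rank K = 2) (hodd : Odd (Module.finrank ℚ K)) :
    HasZModRankGE (ClassGroup (𝓞 K)) n 2 := by
  have main := aux_main θ hadj y n hy A hA hmin hn D hDy hD hres hy13
  have heq : θ ^ 3 + (A : 𝓞 K) * θ ^ 2 + ((A : 𝓞 K) - 3) * θ - 1 = 0 := by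
    rw [← auxP_aeval, ← hmin, minpoly.aeval]
  have hA' : 2 * (A : 𝓞 K) = (y : 𝓞 K) ^ n + 3 := by exact_mod_cast congrArg (Int.cast : ℤ → 𝓞 K) hA
  have hid : (θ - 1) * ((θ + 2) * (2 * θ + 1)) = -(y : 𝓞 K) ^ n * (θ * (θ + 1)) := by
    linear_combination 2 * heq - (θ ^ 2 + θ) * hA'
  have hy0 : (y : 𝓞 K) ≠ 0 := by exact_mod_cast hy.ne'
  let e₁ : (𝓞 K)ˣ := Units.mkOfMulEqOne θ (θ ^ 2 + A * θ + (A - 3)) (by linear_combination heq)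
  let e₂ : (𝓞 K)ˣ := Units.mkOfMulEqOne (θ + 1) (-(θ ^ 2 + (A - 1) * θ - 2))
    (by linear_combination -heq)
  have he₁ : (e₁ : 𝓞 K) = θ := rfl
  have he₂ : (e₂ : 𝓞 K) = θ + 1 := rfl
  have hsp : Ideal.span {(y : 𝓞 K)} ^ n = Ideal.span {-(y : 𝓞 K) ^ n * (θ * (θ + 1))} := by
    rw [Ideal.span_singleton_pow, Ideal.span_singleton_eq_span_singleton]
    refine ⟨-(e₁ * e₂), ?_⟩
    rw [Units.val_neg, Units.val_mul, he₁, he₂]; ring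
  have hcop : IsCoprime ((y : 𝓞 K) ^ n) 9 := by
    have h3 : Nat.Coprime (y ^ n) 9 := by
      have : Nat.Coprime y 3 := ((Nat.Prime.coprime_iff_not_dvd Nat.prime_three).mpr hy3).symm
      exact (Nat.Coprime.pow n 2 this)
    have h4 : IsCoprime ((y ^ n : ℕ) : ℤ) ((9 : ℕ) : ℤ) := Nat.isCoprime_iff_coprime.mpr h3
    have h5 := h4.map (Int.castRingHom (𝓞 K))
    simpa using h5
  have hdvd : ∀ x z : 𝓞 K, x * z = -(y : 𝓞 K) ^ n * (θ * (θ + 1)) → x ∣ (y : 𝓞 K) ^ n := by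
    intro x z h
    refine ⟨-(z * ((e₁ * e₂)⁻¹ : (𝓞 K)ˣ)), ?_⟩
    have hu : θ * (θ + 1) * ((e₁ * e₂)⁻¹ : (𝓞 K)ˣ) = 1 := by
      have := (e₁ * e₂).mul_inv
      rwa [Units.val_mul, he₁, he₂] at this
    linear_combination (((e₁ * e₂)⁻¹ : (𝓞 K)ˣ) : 𝓞 K) * h - (y : 𝓞 K) ^ n * hu
  have hid2 : (θ + 2) * ((θ - 1) * (2 * θ + 1)) = -(y : 𝓞 K) ^ n * (θ * (θ + 1)) := by
    linear_combination hid
  have hI : ∃ I : Ideal (𝓞 K), Ideal.span {θ - 1} = I ^ n := by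
    refine exists_eq_pow_of_mul_eq_pow_of_coprime (b := Ideal.span {(θ + 2) * (2 * θ + 1)})
      (c := Ideal.span {(y : 𝓞 K)}) ?_ ?_
    · rw [Ideal.isCoprime_span_singleton_iff]
      have h := (hcop.of_isCoprime_of_dvd_left (hdvd _ _ hid)).add_mul_left_right (2 * θ + 7)
      convert h using 1
      ring
    · rw [Ideal.span_singleton_mul_span_singleton, hid, hsp]
  have hJ : ∃ I : Ideal (𝓞 K), Ideal.span {θ + 2} = I ^ n := by
    refine exists_eq_pow_of_mul_eq_pow_of_coprime (b := Ideal.span {(θ - 1) * (2 * θ + 1)})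
      (c := Ideal.span {(y : 𝓞 K)}) ?_ ?_
    · rw [Ideal.isCoprime_span_singleton_iff]
      have h := (hcop.of_isCoprime_of_dvd_left (hdvd _ _ hid2)).add_mul_left_right (2 * θ - 5)
      convert h using 1
      ring
    · rw [Ideal.span_singleton_mul_span_singleton, hid2, hsp]
  obtain ⟨I, hI⟩ := hI
  obtain ⟨J, hJ⟩ := hJ
  have hne : ∀ x z : 𝓞 K, x * z = -(y : 𝓞 K) ^ n * (θ * (θ + 1)) → x ≠ 0 := by
    intro x z h h0
    have := hdvd x z h
    rw [h0, zero_dvd_iff] at this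
    exact pow_ne_zero n hy0 this
  have hI0 : I ≠ 0 := by
    rintro rfl
    rw [zero_pow hn, Ideal.zero_eq_bot, Ideal.span_singleton_eq_bot] at hI
    exact hne _ _ hid hI
  have hJ0 : J ≠ 0 := by
    rintro rfl
    rw [zero_pow hn, Ideal.zero_eq_bot, Ideal.span_singleton_eq_bot] at hJ
    exact hne _ _ hid2 hJ
  let I' : nonZeroDivisors (Ideal (𝓞 K)) := ⟨I, mem_nonZeroDivisors_of_ne_zero hI0⟩
  let J' : nonZeroDivisors (Ideal (𝓞 K)) := ⟨J, mem_nonZeroDivisors_of_ne_zero hJ0⟩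
  have hg : ClassGroup.mk0 I' ^ n = 1 := by
    rw [← map_pow]
    refine (ClassGroup.mk0_eq_one_iff (I' ^ n).2).mpr ?_
    change (I ^ n).IsPrincipal
    rw [← hI]; exact ⟨_, rfl⟩
  have hh : ClassGroup.mk0 J' ^ n = 1 := by
    rw [← map_pow]
    refine (ClassGroup.mk0_eq_one_iff (J' ^ n).2).mpr ?_
    change (J ^ n).IsPrincipal
    rw [← hJ]; exact ⟨_, rfl⟩
  refine aux_rank n hn _ _ hg hh (aux_group n hn _ _ ?_)
  intro p hp hpn a b hab
  rw [← map_pow, ← map_pow, ← map_mul] at hab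
  have hpr := (ClassGroup.mk0_eq_one_iff (I' ^ (n / p * a) * J' ^ (n / p * b)).2).mp hab
  change (I ^ (n / p * a) * J ^ (n / p * b)).IsPrincipal at hpr
  obtain ⟨γ, hγ⟩ := hpr
  have hγ' : I ^ (n / p * a) * J ^ (n / p * b) = Ideal.span {γ} := hγ
  have hnp : n / p * p = n := Nat.div_mul_cancel hpn
  have hspan : Ideal.span {(θ - 1) ^ a * (θ + 2) ^ b} = Ideal.span {γ ^ p} := by
    rw [← Ideal.span_singleton_pow, ← hγ', ← Ideal.span_singleton_mul_span_singleton,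
      ← Ideal.span_singleton_pow, ← Ideal.span_singleton_pow, hI, hJ, mul_pow, ← pow_mul, ← pow_mul,
      ← pow_mul, ← pow_mul]
    congr 2
    · conv_lhs => rw [← hnp]
      ring
    · conv_lhs => rw [← hnp]
      ring
  obtain ⟨u, hu⟩ := Ideal.span_singleton_eq_span_singleton.mp hspan
  obtain ⟨i, j, s, ε, hs, hui⟩ := aux_units hr hodd p hp e₁ e₂ (by
    intro i j s hs ε h
    have h' := congrArg (Units.val) h
    simp only [Units.val_mul, Units.val_pow_eq_pow_val, he₁, he₂] at h'
    have : ∃ s' : ℤ, (s' = 1 ∨ s' = -1) ∧ (s' : 𝓞 K) = s := by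
      rcases hs with rfl | rfl
      · exact ⟨1, Or.inl rfl, by simp⟩
      · exact ⟨-1, Or.inr rfl, by simp⟩
    obtain ⟨s', hs', hss⟩ := this
    have := main p hp hpn s' hs' i j 0 0 ε (by rw [hss, ← h']; ring)
    exact ⟨this.1, this.2.1⟩) u
  have : ∃ s' : ℤ, (s' = 1 ∨ s' = -1) ∧ (s' : 𝓞 K) = s := by
    rcases hs with rfl | rfl
    · exact ⟨1, Or.inl rfl, by simp⟩
    · exact ⟨-1, Or.inr rfl, by simp⟩
  obtain ⟨s', hs', hss⟩ := this
  have hε : (ε : 𝓞 K) * (ε⁻¹ : (𝓞 K)ˣ) = 1 := ε.mul_inv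
  have := main p hp hpn s' hs' i j a b (γ * (ε⁻¹ : (𝓞 K)ˣ)) (by
    rw [mul_pow, ← hu, hui, hss]
    simp only [Units.val_mul, Units.val_pow_eq_pow_val, he₁, he₂]
    have hεp : (ε : 𝓞 K) ^ p * ((ε⁻¹ : (𝓞 K)ˣ) : 𝓞 K) ^ p = 1 := by rw [← mul_pow, hε, one_pow]
    linear_combination (-(s : 𝓞 K) * θ ^ i * (θ + 1) ^ j * (θ - 1) ^ a * (θ + 2) ^ b) * hεp)
  exact this.2.2



/-- Rational version. -/
noncomputable def auxPQ (A : ℤ) : ℚ[X] := (auxP A).map (Int.castRingHom ℚ)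

theorem auxPQ_eq (A : ℤ) : auxPQ A = X ^ 3 + C (A : ℚ) * X ^ 2 + C ((A : ℚ) - 3) * X - 1 := by
  simp [auxPQ, auxP]
  exact (map_ofNat C 3).symm

theorem auxPQ_natDegree (A : ℤ) : (auxPQ A).natDegree = 3 := by
  rw [auxPQ_eq]; compute_degree!

theorem auxPQ_monic (A : ℤ) : (auxPQ A).Monic := by
  rw [auxPQ_eq]; monicity!

theorem auxP_monic (A : ℤ) : (auxP A).Monic := by
  rw [auxP]; monicity!

theorem auxPQ_aeval {L : Type*} [Field L] [Algebra ℚ L] (A : ℤ) (r : L) :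
    aeval r (auxPQ A) = r ^ 3 + (A : L) * r ^ 2 + ((A : L) - 3) * r - 1 := by
  rw [auxPQ, ← algebraMap_int_eq, aeval_map_algebraMap, auxP_aeval]

theorem auxPQ_irr (A : ℤ) (hA : 2 * A - 3 ≠ 0) : Irreducible (auxPQ A) := by
  refine irreducible_of_degree_le_three_of_not_isRoot (by rw [auxPQ_natDegree]; simp) ?_
  intro x hx
  have hx' : aeval x (auxP A) = 0 := by
    have : aeval x (auxPQ A) = 0 := by rw [coe_aeval_eq_eval]; exact hx
    rwa [auxPQ, ← algebraMap_int_eq, aeval_map_algebraMap] at this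
  obtain ⟨z, rfl⟩ := isInteger_of_is_root_of_monic (auxP_monic A) hx'
  rw [auxP_aeval] at hx'
  have h : z ^ 3 + A * z ^ 2 + (A - 3) * z - 1 = 0 := by
    have : ((z ^ 3 + A * z ^ 2 + (A - 3) * z - 1 : ℤ) : ℚ) = 0 := by
      push_cast; simpa using hx'
    exact_mod_cast this
  have hz : z ∣ 1 := ⟨z ^ 2 + A * z + (A - 3), by linear_combination -h⟩
  rcases Int.isUnit_iff.mp (isUnit_of_dvd_one hz) with rfl | rfl
  · apply hA; linear_combination h
  · ring_nf at h; omega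

theorem aux_field {L : Type*} [Field L] [NumberField L] (A : ℤ) (hirr : Irreducible (auxPQ A))
    (θ : L) (hθ : aeval θ (auxPQ A) = 0) (hadj : Algebra.adjoin ℚ {θ} = ⊤) :
    (auxPQ A).IsSplittingField ℚ L ∧ Module.finrank ℚ L = 3 ∧ IsGalois ℚ L ∧
      Nonempty ((L ≃ₐ[ℚ] L) ≃* Multiplicative (ZMod 3)) ∧ TotallyReal L ∧
      NumberField.Units.rank L = 2 ∧ ∃ θ' : 𝓞 L, (θ' : L) = θ ∧ minpoly ℤ θ' = auxP A := by
  have hne := hirr.ne_zero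
  have hroot := hθ
  rw [auxPQ_aeval] at hθ
  have hsplit : (auxPQ A).IsSplittingField ℚ L := by
    constructor
    · have hfac : (auxPQ A).map (algebraMap ℚ L) =
          (X - C θ) * (X - C (θ ^ 2 + (A - 1) * θ - 2)) * (X - C (-θ ^ 2 - A * θ + 2 - A)) := by
        have h1 : (auxPQ A).map (algebraMap ℚ L)
            = X ^ 3 + C (A : L) * X ^ 2 + C ((A : L) - 3) * X - 1 := by
          rw [auxPQ_eq]; simp
        have h2 : (θ ^ 2 + (A - 1) * θ - 2) * (-θ ^ 2 - A * θ + 2 - A) = θ ^ 2 + A * θ + A - 3 := by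
          linear_combination (1 - A - θ) * hθ
        have h3 : θ * (θ ^ 2 + A * θ + A - 3) = 1 := by linear_combination hθ
        rw [h1]
        have e2 : C (θ ^ 2 + (A - 1) * θ - 2) * C (-θ ^ 2 - A * θ + 2 - A)
            = (C (θ ^ 2 + A * θ + A - 3) : L[X]) := by rw [← C_mul, h2]
        have e3 : C θ * C (θ ^ 2 + A * θ + A - 3) = (1 : L[X]) := by rw [← C_mul, h3, C_1]
        simp only [map_add, map_sub, map_mul, map_neg, map_pow, map_one, map_ofNat] at e2 e3 ⊢
        linear_combination (C θ - X) * e2 + e3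
      rw [hfac]
      exact ((Splits.X_sub_C _).mul (Splits.X_sub_C _)).mul (Splits.X_sub_C _)
    · rw [eq_top_iff, ← hadj]
      apply Algebra.adjoin_mono
      rw [Set.singleton_subset_iff, mem_rootSet]
      exact ⟨hne, hroot⟩
  have hmp : minpoly ℚ θ = auxPQ A :=
    (minpoly.eq_of_irreducible_of_monic hirr hroot (auxPQ_monic A)).symm
  have hint : IsIntegral ℚ θ := ⟨_, auxPQ_monic A, hroot⟩
  have hfr : Module.finrank ℚ L = 3 := by
    have htop : IntermediateField.adjoin ℚ {θ} = ⊤ := by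
      rw [← IntermediateField.toSubalgebra_inj,
        IntermediateField.adjoin_simple_toSubalgebra_of_isAlgebraic hint.isAlgebraic, hadj]
      rfl
    have := IntermediateField.adjoin.finrank hint
    rw [htop, IntermediateField.finrank_top', hmp, auxPQ_natDegree] at this
    exact this
  have hgal : IsGalois ℚ L := IsGalois.of_separable_splitting_field hirr.separable
  have hodd : Odd (Module.finrank ℚ L) := by rw [hfr]; decide
  have hunr : IsUnramifiedAtInfinitePlaces ℚ L := IsUnramifiedAtInfinitePlaces_of_odd_finrank hodd
  refine ⟨hsplit, hfr, hgal, ?_, ?_, ?_, ?_⟩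
  · have hc : Nat.card (L ≃ₐ[ℚ] L) = 3 := by rw [IsGalois.card_aut_eq_finrank, hfr]
    have : Fact (Nat.Prime 3) := ⟨Nat.prime_three⟩
    have hcyc : IsCyclic (L ≃ₐ[ℚ] L) := isCyclic_of_prime_card hc
    have e := zmodCyclicMulEquiv hcyc
    rw [hc] at e
    exact ⟨e.symm⟩
  · intro φ x
    have hreal : (InfinitePlace.mk φ).IsReal := by
      refine (InfinitePlace.isUnramified_iff.mp (hunr.isUnramified (InfinitePlace.mk φ))).resolve_right ?_
      rw [InfinitePlace.not_isComplex_iff_isReal]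
      exact IsTotallyReal.isReal _
    have := InfinitePlace.isReal_mk_iff.mp hreal
    have := RingHom.congr_fun this x
    exact Complex.conj_eq_iff_im.mp this
  · rw [NumberField.Units.rank, IsUnramifiedAtInfinitePlaces.card_infinitePlace ℚ L, hfr]
    simp
  · have hintZ : IsIntegral ℤ θ := ⟨auxP A, auxP_monic A, by
      have := hθ
      rw [← auxP_aeval] at this
      exact this⟩
    refine ⟨⟨θ, hintZ⟩, rfl, ?_⟩
    exact aux_minpoly_int _ _ hmp



theorem aux_construct (n k : ℕ) (hn : n ≠ 0) (hk : k ≠ 0) : ∃ K : IntermediateField ℚ ℂ,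
    (∃ y : ℕ, 0 < y ∧ Odd y ∧ ¬ (3 ∣ y) ∧
        (let P : Polynomial ℚ := X ^ 3 + C (((y : ℚ) ^ n + 3) / 2) * X ^ 2 +
          C (((y : ℚ) ^ n - 3) / 2) * X - 1
         Irreducible P ∧ P.IsSplittingField ℚ K) ∧
        NumberField K ∧ Module.finrank ℚ K = 3 ∧ IsGalois ℚ K ∧
        Nonempty ((K ≃ₐ[ℚ] K) ≃* Multiplicative (ZMod 3)) ∧
        TotallyReal K ∧
        HasZModRankGE (ClassGroup (𝓞 K)) n 2) ∧ k ≤ Nat.card (ClassGroup (𝓞 K)) := by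
  have hN : n * k ≠ 0 := mul_ne_zero hn hk
  obtain ⟨D, hD0, hD, hres⟩ := aux_exists_D (n * k)
  have hcop : ∀ q : ℕ, q.Prime → q ∣ 78 → ¬ q ∣ D := by
    intro q hq h78 hqD
    have := Nat.dvd_gcd hqD h78
    rw [hD] at this
    exact hq.one_lt.ne' (Nat.dvd_one.mp this)
  have h2 : ¬ 2 ∣ D := hcop 2 Nat.prime_two (by norm_num)
  have h3 : ¬ 3 ∣ D := hcop 3 Nat.prime_three (by norm_num)
  have h13 : ¬ 13 ∣ D := hcop 13 (by norm_num) (by norm_num)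
  obtain ⟨y, hy⟩ : ∃ y, y = D ^ 12 := ⟨_, rfl⟩
  have hy0 : 0 < y := by rw [hy]; positivity
  have hyodd : Odd y := by
    rw [hy]; exact (Nat.odd_iff.mpr (by omega : D % 2 = 1)).pow
  have hy3 : ¬ 3 ∣ y := by rw [hy]; exact fun h => h3 (Nat.prime_three.dvd_of_dvd_pow h)
  have hy13 : (y : ZMod 13) = 1 := by
    rw [hy, Nat.cast_pow]
    refine ZMod.pow_card_sub_one_eq_one (p := 13) ?_
    rw [Ne, ZMod.natCast_eq_zero_iff]; exact h13
  have hDy : D ∣ y := by rw [hy]; exact dvd_pow_self _ (by norm_num)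
  obtain ⟨A, hA⟩ : ∃ A : ℤ, 2 * A = (y : ℤ) ^ (n * k) + 3 := by
    obtain ⟨m, hm⟩ : Odd (y ^ (n * k)) := hyodd.pow
    refine ⟨m + 2, ?_⟩
    have : (y : ℤ) ^ (n * k) = 2 * m + 1 := by exact_mod_cast hm
    rw [this]; ring
  have hirr : Irreducible (auxPQ A) := by
    apply auxPQ_irr
    rw [hA, add_sub_cancel_right]
    exact pow_ne_zero _ (by exact_mod_cast hy0.ne')
  have hPeq : X ^ 3 + C ((((y ^ k : ℕ) : ℚ) ^ n + 3) / 2) * X ^ 2 +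
          C ((((y ^ k : ℕ) : ℚ) ^ n - 3) / 2) * X - 1 = auxPQ A := by
    have hAQ : 2 * (A : ℚ) = (y : ℚ) ^ (n * k) + 3 := by
      exact_mod_cast congrArg (Int.cast : ℤ → ℚ) hA
    have e : ((y ^ k : ℕ) : ℚ) ^ n = 2 * A - 3 := by
      rw [Nat.cast_pow, ← pow_mul, mul_comm k n]; linarith
    rw [auxPQ_eq, e]
    congr 4
    · congr 1; ring
    · ring
  obtain ⟨z, hz⟩ := IsAlgClosed.exists_aeval_eq_zero ℂ (auxPQ A) (by
    rw [degree_eq_natDegree hirr.ne_zero, auxPQ_natDegree]; norm_num)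
  have hint : IsIntegral ℚ z := ⟨_, auxPQ_monic A, hz⟩
  let K : IntermediateField ℚ ℂ := IntermediateField.adjoin ℚ {z}
  have hfin : FiniteDimensional ℚ K := IntermediateField.adjoin.finiteDimensional hint
  have hNF : NumberField K := ⟨⟩
  let θ : K := IntermediateField.AdjoinSimple.gen ℚ z
  have hθ : aeval θ (auxPQ A) = 0 := by
    have h : (algebraMap K ℂ) (aeval θ (auxPQ A)) = 0 := by
      rw [← aeval_algebraMap_apply]
      exact hz
    exact (map_eq_zero _).mp h
  have hadj : Algebra.adjoin ℚ {θ} = ⊤ := by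
    have h := (IntermediateField.adjoin.powerBasis hint).adjoin_gen_eq_top
    rwa [IntermediateField.adjoin.powerBasis_gen] at h
  obtain ⟨hsp, hfr, hgal, hG, hreal, hr, θ', hθ', hmin⟩ := aux_field A hirr θ hθ hadj
  have hcl : HasZModRankGE (ClassGroup (𝓞 K)) (n * k) 2 :=
    aux_class θ' (by rw [hθ']; exact hadj) y (n * k) hy0 A hA hmin hN D hDy hD hres hy13 hy3 hr
      (by rw [hfr]; decide)
  refine ⟨K, ⟨y ^ k, pow_pos hy0 k, hyodd.pow, fun h => hy3 (Nat.prime_three.dvd_of_dvd_pow h), ?_,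
    hNF, hfr, hgal, hG, hreal, aux_rank_div n k hn hk hcl⟩, ?_⟩
  · intro P
    have hP : P = auxPQ A := hPeq
    rw [hP]
    exact ⟨hirr, hsp⟩
  · exact (Nat.le_mul_of_pos_left k (Nat.pos_of_ne_zero hn)).trans (aux_rank_card _ hN hcl)

theorem aux_noniso (K K' : IntermediateField ℚ ℂ) (hg : IsGalois ℚ K) (e : K ≃+* K') : K = K' := by
  have hnorm : @Normal ℚ K _ _ (IntermediateField.algebra' K) := hg.to_normal
  let f : @AlgHom ℚ K ℂ _ _ _ (IntermediateField.algebra' K) _ := RingHom.toRatAlgHom ((algebraMap K' ℂ).comp e.toRingHom)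
  have h1 := AlgHom.fieldRange_of_normal f
  ext x
  have h2 : x ∈ K ↔ ∃ a : K, ((e a : K') : ℂ) = x := by
    conv_lhs => rw [← h1]
    exact AlgHom.mem_fieldRange
  rw [h2]
  constructor
  · rintro ⟨a, rfl⟩
    exact (e a).2
  · intro hx
    refine ⟨e.symm ⟨x, hx⟩, ?_⟩
    rw [e.apply_symm_apply]

/-- **Cyclic cubic fields with large class group (`G = ℤ/3ℤ`).**
For every integer `n > 1` there are infinitely many pairwise non-isomorphic totally real
cyclic cubic fields `K`, each a splitting field of an irreducible polynomial
`x³ + ((yⁿ + 3)/2)x² + ((yⁿ - 3)/2)x - 1` with `y` a positive odd integer with `3 ∤ y`,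
such that `rank_n Cl(K) ≥ 2`. -/
theorem cyclic_cubic_large_class_group (n : ℕ) (hn : 1 < n) :
    ∃ S : Set (IntermediateField ℚ ℂ), S.Infinite ∧
      (∀ K ∈ S, ∀ K' ∈ S, K ≠ K' → IsEmpty (K ≃+* K')) ∧
      ∀ K ∈ S, ∃ y : ℕ, 0 < y ∧ Odd y ∧ ¬ (3 ∣ y) ∧
        (let P : Polynomial ℚ := X ^ 3 + C (((y : ℚ) ^ n + 3) / 2) * X ^ 2 +
          C (((y : ℚ) ^ n - 3) / 2) * X - 1
         Irreducible P ∧ P.IsSplittingField ℚ K) ∧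
        NumberField K ∧ Module.finrank ℚ K = 3 ∧ IsGalois ℚ K ∧
        Nonempty ((K ≃ₐ[ℚ] K) ≃* Multiplicative (ZMod 3)) ∧
        TotallyReal K ∧
        HasZModRankGE (ClassGroup (𝓞 K)) n 2 := by
  refine ⟨{K | ∃ y : ℕ, 0 < y ∧ Odd y ∧ ¬ (3 ∣ y) ∧
        (let P : Polynomial ℚ := X ^ 3 + C (((y : ℚ) ^ n + 3) / 2) * X ^ 2 +
          C (((y : ℚ) ^ n - 3) / 2) * X - 1
         Irreducible P ∧ P.IsSplittingField ℚ K) ∧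
        NumberField K ∧ Module.finrank ℚ K = 3 ∧ IsGalois ℚ K ∧
        Nonempty ((K ≃ₐ[ℚ] K) ≃* Multiplicative (ZMod 3)) ∧
        TotallyReal K ∧
        HasZModRankGE (ClassGroup (𝓞 K)) n 2}, ?_, ?_, fun K hK => hK⟩
  · intro hfin
    obtain ⟨B, hB⟩ := (hfin.image
      (fun K : IntermediateField ℚ ℂ => Nat.card (ClassGroup (𝓞 K)))).bddAbove
    obtain ⟨K, hK, hcard⟩ := aux_construct n (B + 1) (by omega) (by omega)
    have : Nat.card (ClassGroup (𝓞 K)) ≤ B := hB (Set.mem_image_of_mem _ hK)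
    omega
  · intro K hK K' _ hne
    obtain ⟨y, _, _, _, _, _, _, hg, _⟩ := hK
    exact ⟨fun e => hne (aux_noniso K K' hg e)⟩
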